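/- For an odd prime p and integer n ≥ 3, the modular p-group M(p^n) = ⟨x,y | x^{p^{n-1}} = y^p = 1, y^{-1}xy = x^{1+p^{n-2}}⟩ has exactly one exact factorization up to equivalence, namely M(p^n) = ⟨x⟩ · ⟨y⟩ with ⟨x⟩ ≅ Z_{p^{n-1}} and ⟨y⟩ ≅ Z_p. -/

import Mathlib

/-- An exact factorization of a finite group `G` is a pair of nontrivial subgroups `(H, K)`
with `HK = G` and `H ∩ K = 1`. -/
def IsExactFactorization {G : Type*} [Group G] (p : Subgroup G × Subgroup G) : Prop :=
  p.1 ≠ ⊥ ∧ p.2 ≠ ⊥ ∧ p.1 ⊓ p.2 = ⊥ ∧ ∀ g : G, ∃ h ∈ p.1, ∃ k ∈ p.2, g = h * k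

/-- Two exact factorizations are equivalent if their factor pairs are isomorphic as
unordered pairs of groups. -/
def FactEquiv {G : Type*} [Group G]
    (p q : {p : Subgroup G × Subgroup G // IsExactFactorization p}) : Prop :=
  (Nonempty (p.1.1 ≃* q.1.1) ∧ Nonempty (p.1.2 ≃* q.1.2)) ∨
  (Nonempty (p.1.1 ≃* q.1.2) ∧ Nonempty (p.1.2 ≃* q.1.1))

/-- The number of exact factorizations of a group, counted up to equivalence. -/
noncomputable def f₂ (G : Type*) [Group G] : ℕ :=
  Nat.card (Quot (FactEquiv (G := G)))

theorem mpg_swap_pow {G : Type*} [Group G] (a b c : G) (hc : ∀ g, c * g = g * c)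
    (h : b * a = a * b * c) (m : ℕ) : b ^ m * a = a * b ^ m * c ^ m := by
  have hcp : ∀ (k : ℕ) g, c ^ k * g = g * c ^ k := fun k g =>
    (Commute.pow_left (show Commute c g from hc g) k).eq
  induction m with
  | zero => simp
  | succ m ih =>
    calc b ^ (m + 1) * a = b ^ m * (b * a) := by rw [pow_succ]; group
      _ = (b ^ m * a) * b * c := by rw [h]; group
      _ = a * b ^ m * (c ^ m * b) * c := by rw [ih]; group
      _ = a * b ^ (m + 1) * c ^ (m + 1) := by
        rw [hcp m b, pow_succ, pow_succ]; simp only [mul_assoc]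

theorem mpg_mul_pow {G : Type*} [Group G] (a b c : G) (hc : ∀ g, c * g = g * c)
    (h : b * a = a * b * c) (m : ℕ) :
    (a * b) ^ m = a ^ m * b ^ m * c ^ (∑ i ∈ Finset.range m, i) := by
  have hcp : ∀ (k : ℕ) g, c ^ k * g = g * c ^ k := fun k g =>
    (Commute.pow_left (show Commute c g from hc g) k).eq
  induction m with
  | zero => simp
  | succ m ih =>
    rw [Finset.sum_range_succ, pow_succ, ih, mul_assoc, hcp]
    calc _ = a ^ m * (b ^ m * a) * b * c ^ (∑ i ∈ Finset.range m, i) := by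
            simp only [mul_assoc]
      _ = a ^ m * a * b ^ m * (c ^ m * b) * c ^ (∑ i ∈ Finset.range m, i) := by
            rw [mpg_swap_pow a b c hc h]; simp only [mul_assoc]
      _ = _ := by
            rw [hcp m b, pow_succ, pow_succ, add_comm, pow_add c]; simp only [mul_assoc]

theorem mpg_key {G : Type*} [Group G] {p n : ℕ} (hp : p.Prime) (hn : 3 ≤ n)
    (hcard : Nat.card G = p ^ n)
    (hpow : ∀ a b : G, a ^ p ^ (n - 2) = 1 → b ^ p ^ (n - 2) = 1 → (a * b) ^ p ^ (n - 2) = 1)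
    (x : G) (hx : orderOf x = p ^ (n - 1)) (H K : Subgroup G)
    (h : IsExactFactorization (H, K)) :
    (IsCyclic H ∧ Nat.card H = p ^ (n - 1) ∧ IsCyclic K ∧ Nat.card K = p) ∨
    (IsCyclic K ∧ Nat.card K = p ^ (n - 1) ∧ IsCyclic H ∧ Nat.card H = p) := by
  obtain ⟨h1, h2, h3, h4⟩ := h
  simp only at h1 h2 h3 h4
  have := Fact.mk hp
  have hfin : Finite G := Nat.finite_of_card_ne_zero (by rw [hcard]; exact pow_ne_zero _ hp.ne_zero)
  have hc : Nat.card H * Nat.card K = p ^ n := by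
    rw [← hcard]
    apply Subgroup.IsComplement.card_mul_card (S := (H : Set G)) (T := (K : Set G))
    apply Subgroup.isComplement'_of_disjoint_and_mul_eq_univ (disjoint_iff.2 h3)
    ext g
    obtain ⟨a, ha, b, hb, rfl⟩ := h4 g
    simpa using Set.mul_mem_mul ha hb
  have aux : ∀ A B : Subgroup G, B ≠ ⊥ → Nat.card A * Nat.card B = p ^ n →
      ∀ a ∈ A, a ^ p ^ (n - 2) ≠ 1 →
      (IsCyclic A ∧ Nat.card A = p ^ (n - 1) ∧ IsCyclic B ∧ Nat.card B = p) := by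
    intro A B hB hAB a ha hne
    obtain ⟨i, hi, hiA⟩ := (Nat.dvd_prime_pow hp).1 (Dvd.intro _ hAB)
    obtain ⟨j, hj, hjB⟩ := (Nat.dvd_prime_pow hp).1 (Dvd.intro_left _ hAB)
    have hij : i + j = n := by
      rw [hiA, hjB, ← pow_add] at hAB
      exact Nat.pow_right_injective hp.two_le hAB
    have hj0 : j ≠ 0 := by
      rintro rfl
      exact hB ((Subgroup.card_eq_one).1 (by simpa using hjB))
    have hd : orderOf a ∣ p ^ i := by
      rw [← hiA]; exact A.orderOf_dvd_natCard ha
    obtain ⟨k, hk, hka⟩ := (Nat.dvd_prime_pow hp).1 hd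
    have hk2 : ¬ k ≤ n - 2 := fun hle =>
      hne (orderOf_dvd_iff_pow_eq_one.1 (hka ▸ pow_dvd_pow p hle))
    have hi1 : i = n - 1 := by omega
    have hk1 : k = i := by omega
    have hj1 : j = 1 := by omega
    subst hk1 hj1
    rw [pow_one] at hjB
    refine ⟨isCyclic_of_orderOf_eq_card (⟨a, ha⟩ : A) ?_, by rw [hiA, hi1],
      isCyclic_of_prime_card hjB, hjB⟩
    rw [Subgroup.orderOf_mk, hka, hiA]
  obtain ⟨a, ha, b, hb, hab⟩ := h4 x
  by_cases ea : a ^ p ^ (n - 2) = 1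
  · by_cases eb : b ^ p ^ (n - 2) = 1
    · exfalso
      have := hpow a b ea eb
      rw [← hab, ← orderOf_dvd_iff_pow_eq_one, hx, Nat.pow_dvd_pow_iff_le_right hp.one_lt] at this
      omega
    · exact Or.inr (aux K H h1 (by rw [mul_comm]; exact hc) b hb eb)
  · exact Or.inl (aux H K h2 hc a ha ea)

theorem mpg_pow {G : Type*} [Group G] {p n : ℕ} (hodd : Odd p) (hn : 3 ≤ n)
    (x y : G) (hx : x ^ (p ^ (n - 1)) = 1)
    (hconj : y⁻¹ * x * y = x ^ (1 + p ^ (n - 2)))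
    (hgen : Subgroup.closure {x, y} = ⊤) (a b : G)
    (ha : a ^ p ^ (n - 2) = 1) (hb : b ^ p ^ (n - 2) = 1) : (a * b) ^ p ^ (n - 2) = 1 := by
  set z := x ^ p ^ (n - 2) with hz
  have hzp : z ^ p = 1 := by
    rw [hz, ← pow_mul, ← pow_succ, show n - 2 + 1 = n - 1 by omega, hx]
  have hzq : z ^ p ^ (n - 2) = 1 := by
    rw [show n - 2 = (n - 3) + 1 by omega, pow_succ', pow_mul, hzp, one_pow]
  have hzy : y⁻¹ * z * y = z := by
    have := conj_pow (i := p ^ (n - 2)) (a := y⁻¹) (b := x)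
    rw [inv_inv, hconj, ← pow_mul, add_mul, one_mul, pow_add, pow_mul, ← hz, hzq, mul_one] at this
    exact this.symm
  have hcen : ∀ g, z * g = g * z := by
    intro g
    have : g ∈ Subgroup.closure {x, y} := hgen ▸ Subgroup.mem_top g
    have hle : Subgroup.closure {x, y} ≤ Subgroup.centralizer {z} := by
      rw [Subgroup.closure_le]
      rintro w (rfl | rfl)
      · rw [SetLike.mem_coe, Subgroup.mem_centralizer_singleton_iff]
        exact (Commute.self_pow _ _).eq
      · rw [SetLike.mem_coe, Subgroup.mem_centralizer_singleton_iff]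
        nth_rewrite 1 [← hzy]; group
    exact (Subgroup.mem_centralizer_singleton_iff.1 (hle this)).symm
  -- commutators
  have hZn : (Subgroup.zpowers z).Normal := by
    constructor
    rintro w ⟨k, rfl⟩ g
    have : g * z ^ k = z ^ k * g := ((show Commute g z from (hcen g).symm).zpow_right k).eq
    simp only [this, mul_inv_cancel_right]
    exact ⟨k, rfl⟩
  have hxy : (x : G ⧸ Subgroup.zpowers z) * (y : G ⧸ Subgroup.zpowers z) = y * x := by
    have h : x * y = y * x * z := by
      have : x * y = y * (y⁻¹ * x * y) := by group
      rw [this, hconj, pow_add, pow_one, mul_assoc]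
    have hz1 : (z : G ⧸ Subgroup.zpowers z) = 1 :=
      (QuotientGroup.eq_one_iff z).2 (Subgroup.mem_zpowers z)
    rw [← QuotientGroup.mk_mul, h, QuotientGroup.mk_mul, hz1, mul_one, QuotientGroup.mk_mul]
  have hcomm1 : ∀ w : G, w = x ∨ w = y → ∀ g : G,
      (g : G ⧸ Subgroup.zpowers z) * w = w * g := by
    intro w hw g
    have : g ∈ Subgroup.closure {x, y} := hgen ▸ Subgroup.mem_top g
    have hle : Subgroup.closure {x, y} ≤ (Subgroup.centralizer
        {(w : G ⧸ Subgroup.zpowers z)}).comap (QuotientGroup.mk' _) := by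
      rw [Subgroup.closure_le]
      intro v hv
      rw [SetLike.mem_coe, Subgroup.mem_comap, Subgroup.mem_centralizer_singleton_iff]
      simp only [QuotientGroup.mk'_apply]
      rcases hv with rfl | rfl <;> rcases hw with rfl | rfl
      · rfl
      · exact hxy
      · exact hxy.symm
      · rfl
    exact Subgroup.mem_centralizer_singleton_iff.1 (hle this)
  have hcomm : ∀ g h : G, (g : G ⧸ Subgroup.zpowers z) * h = h * g := by
    intro g h
    have : g ∈ Subgroup.closure {x, y} := hgen ▸ Subgroup.mem_top g
    have hle : Subgroup.closure {x, y} ≤ (Subgroup.centralizer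
        {(h : G ⧸ Subgroup.zpowers z)}).comap (QuotientGroup.mk' _) := by
      rw [Subgroup.closure_le]
      intro v hv
      rw [SetLike.mem_coe, Subgroup.mem_comap, Subgroup.mem_centralizer_singleton_iff]
      exact (hcomm1 v hv h).symm
    exact Subgroup.mem_centralizer_singleton_iff.1 (hle this)
  obtain ⟨k, hk⟩ : (a * b)⁻¹ * (b * a) ∈ Subgroup.zpowers z := by
    rw [← QuotientGroup.eq]
    exact hcomm a b
  have hk' : z ^ k = (a * b)⁻¹ * (b * a) := hk
  rw [mpg_mul_pow a b (z ^ k)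
    (fun g => ((show Commute z g from hcen g).zpow_left k).eq) (by rw [hk']; group), ha, hb]
  have hdvd : p ∣ ∑ i ∈ Finset.range (p ^ (n - 2)), i := by
    rw [Finset.sum_range_id]
    have ho : Odd (p ^ (n - 2)) := hodd.pow
    obtain ⟨t, ht⟩ := ho
    have h2 : (p ^ (n - 2) - 1) = 2 * t := by omega
    rw [h2, mul_left_comm, Nat.mul_div_cancel_left _ (by norm_num)]
    exact (dvd_pow_self p (by omega)).mul_right t
  obtain ⟨t, ht⟩ := hdvd
  have hzk : (z ^ k) ^ p = 1 := by
    rw [← zpow_natCast, ← zpow_mul, mul_comm k, zpow_mul, zpow_natCast, hzp, one_zpow]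
  rw [ht, pow_mul, hzk]
  simp

/-- For an odd prime `p` and `n ≥ 3`, the modular `p`-group
`M(p^n) = ⟨x, y | x^{p^{n-1}} = y^p = 1, y⁻¹xy = x^{1+p^{n-2}}⟩` has exactly one exact
factorization up to equivalence, namely `M(p^n) = ⟨x⟩ · ⟨y⟩` with `⟨x⟩ ≅ Z_{p^{n-1}}` and
`⟨y⟩ ≅ Z_p`. -/
theorem modular_p_group_f₂ (p n : ℕ) (hp : p.Prime) (hodd : Odd p) (hn : 3 ≤ n)
    (G : Type*) [Group G] (x y : G) (hcard : Nat.card G = p ^ n)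
    (hx : x ^ (p ^ (n - 1)) = 1) (hy : y ^ p = 1)
    (hconj : y⁻¹ * x * y = x ^ (1 + p ^ (n - 2)))
    (hgen : Subgroup.closure {x, y} = ⊤) :
    f₂ G = 1 ∧
    Subgroup.closure {x} ⊓ Subgroup.closure {y} = ⊥ ∧
    (∀ g : G, ∃ h ∈ Subgroup.closure {x}, ∃ k ∈ Subgroup.closure {y}, g = h * k) ∧
    Nonempty (Subgroup.closure {x} ≃* Multiplicative (ZMod (p ^ (n - 1)))) ∧
    Nonempty (Subgroup.closure {y} ≃* Multiplicative (ZMod p)) := by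
  simp only [← Subgroup.zpowers_eq_closure]
  have := Fact.mk hp
  have hfin : Finite G := Nat.finite_of_card_ne_zero (by rw [hcard]; exact pow_ne_zero _ hp.ne_zero)
  have hnorm : (Subgroup.zpowers x).Normal := by
    rw [← Subgroup.normalizer_eq_top_iff, eq_top_iff, ← hgen, Subgroup.closure_le]
    rintro w (rfl | rfl)
    · exact Subgroup.le_normalizer (Subgroup.mem_zpowers _)
    · rw [SetLike.mem_coe, ← inv_mem_iff]
      apply Subgroup.mem_normalizer_fintype
      rintro v ⟨k, rfl⟩
      have := conj_zpow (i := k) (a := w⁻¹) (b := x)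
      rw [inv_inv, hconj] at this
      simp only [inv_inv]
      rw [SetLike.mem_coe, ← this]
      exact zpow_mem (pow_mem (Subgroup.mem_zpowers _) _) _
  have hfac : ∀ g : G, ∃ h ∈ Subgroup.zpowers x, ∃ k ∈ Subgroup.zpowers y, g = h * k := by
    intro g
    have hg : g ∈ Subgroup.zpowers x ⊔ Subgroup.zpowers y := by
      have : Subgroup.closure {x, y} ≤ Subgroup.zpowers x ⊔ Subgroup.zpowers y := by
        rw [Subgroup.closure_le]
        rintro w (rfl | rfl)
        · exact Subgroup.mem_sup_left (Subgroup.mem_zpowers _)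
        · exact Subgroup.mem_sup_right (Subgroup.mem_zpowers _)
      exact this (hgen ▸ Subgroup.mem_top g)
    obtain ⟨a, ha, b, hb, hab⟩ := Subgroup.mem_sup_of_normal_left.1 hg
    exact ⟨a, ha, b, hb, hab.symm⟩
  have hsurj : Function.Surjective
      (fun q : Subgroup.zpowers x × Subgroup.zpowers y => (q.1 : G) * q.2) := by
    intro g
    obtain ⟨a, ha, b, hb, hab⟩ := hfac g
    exact ⟨(⟨a, ha⟩, ⟨b, hb⟩), hab.symm⟩
  have hle := Nat.card_le_card_of_surjective _ hsurj
  rw [Nat.card_prod, Nat.card_zpowers, Nat.card_zpowers, hcard] at hle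
  have hox : orderOf x ≤ p ^ (n - 1) :=
    Nat.le_of_dvd (pow_pos hp.pos _) (orderOf_dvd_of_pow_eq_one hx)
  have hoy : orderOf y ≤ p := Nat.le_of_dvd hp.pos (orderOf_dvd_of_pow_eq_one hy)
  have hpn : p ^ n = p ^ (n - 1) * p := by rw [← pow_succ]; congr 1; omega
  have hpos := hp.pos
  have hpos' : 0 < p ^ (n - 1) := pow_pos hp.pos _
  have hox' : orderOf x = p ^ (n - 1) := by
    by_contra hne
    have : orderOf x < p ^ (n - 1) := lt_of_le_of_ne hox hne
    nlinarith
  have hoy' : orderOf y = p := by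
    by_contra hne
    have : orderOf y < p := lt_of_le_of_ne hoy hne
    nlinarith
  have hbij := hsurj.bijective_of_nat_card_le
    (by rw [Nat.card_prod, Nat.card_zpowers, Nat.card_zpowers, hcard, hox', hoy', hpn])
  have hdis : Subgroup.zpowers x ⊓ Subgroup.zpowers y = ⊥ :=
    disjoint_iff.1 (Subgroup.IsComplement'.disjoint hbij)
  have hex : IsExactFactorization (Subgroup.zpowers x, Subgroup.zpowers y) := by
    refine ⟨?_, ?_, hdis, hfac⟩
    · intro h
      rw [Subgroup.zpowers_eq_bot] at h
      rw [h, orderOf_one] at hox'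
      exact (Nat.one_lt_pow (by omega) hp.one_lt).ne hox'
    · intro h
      rw [Subgroup.zpowers_eq_bot] at h
      rw [h, orderOf_one] at hoy'
      exact hp.one_lt.ne hoy'
  refine ⟨?_, hdis, hfac, ?_, ?_⟩
  · unfold f₂
    rw [Nat.card_eq_one_iff_unique]
    refine ⟨⟨?_⟩, ⟨Quot.mk _ ⟨_, hex⟩⟩⟩
    rintro ⟨⟨⟨H, K⟩, hHK⟩⟩ ⟨⟨⟨H', K'⟩, hHK'⟩⟩
    apply Quot.sound
    have key := fun H K h => mpg_key hp hn hcard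
      (mpg_pow hodd hn x y hx hconj hgen) x hox' H K h
    rcases key H K hHK with ⟨c1, d1, c2, d2⟩ | ⟨c1, d1, c2, d2⟩ <;>
    rcases key H' K' hHK' with ⟨c3, d3, c4, d4⟩ | ⟨c3, d3, c4, d4⟩
    · exact Or.inl ⟨⟨mulEquivOfCyclicCardEq (d1.trans d3.symm)⟩,
        ⟨mulEquivOfCyclicCardEq (d2.trans d4.symm)⟩⟩
    · exact Or.inr ⟨⟨mulEquivOfCyclicCardEq (d1.trans d3.symm)⟩,
        ⟨mulEquivOfCyclicCardEq (d2.trans d4.symm)⟩⟩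
    · exact Or.inr ⟨⟨mulEquivOfCyclicCardEq (d2.trans d4.symm)⟩,
        ⟨mulEquivOfCyclicCardEq (d1.trans d3.symm)⟩⟩
    · exact Or.inl ⟨⟨mulEquivOfCyclicCardEq (d2.trans d4.symm)⟩,
        ⟨mulEquivOfCyclicCardEq (d1.trans d3.symm)⟩⟩
  · rw [← Subgroup.zpowers_eq_closure]
    exact ⟨mulEquivOfCyclicCardEq (by rw [Nat.card_zpowers, hox']; simp)⟩
  · rw [← Subgroup.zpowers_eq_closure]
    exact ⟨mulEquivOfCyclicCardEq (by rw [Nat.card_zpowers, hoy']; simp)⟩
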